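/- arXiv:1105.4527 — 7 statements merged into one kernel-verified Lean document; each statement's English description precedes it below -/
import Mathlib

section
/- Let X be a topological space and let U be a subset of X × X. Then the following are equivalent: (1) there exists a continuous map s : U → C([0,1], X) (with C([0,1],X) carrying the compact-open topology) such that for every (x,y) ∈ U the path s(x,y) satisfies s(x,y)(0) = x and s(x,y)(1) = y (i.e., s is a continuous section over U of the fibration π : X^I → X × X, α ↦ (α(0), α(1))); (2) U is vertically compressible to the diagonal Δ(X). -/
open unitInterval

/-- A subset `U` of `X × X` is *vertically compressible to the diagonal* `Δ(X)` if there is a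
continuous map `h : U × [0,1] → X` with `h((x,y),0) = y` and `h((x,y),1) = x` for all
`(x,y) ∈ U`. -/
def VerticallyCompressible {X : Type*} [TopologicalSpace X] (U : Set (X × X)) : Prop :=
  ∃ h : U × I → X, Continuous h ∧
    (∀ p : U, h (p, 0) = (p : X × X).2) ∧
    (∀ p : U, h (p, 1) = (p : X × X).1)

/-- For a subset `U ⊆ X × X`, the following are equivalent: (1) there is a continuous section
`s : U → C([0,1], X)` (compact-open topology) of the path fibration
`π : X^I → X × X, α ↦ (α 0, α 1)` over `U`; (2) `U` is vertically compressible to the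
diagonal `Δ(X)`. -/
theorem section_iff_verticallyCompressible {X : Type*} [TopologicalSpace X] (U : Set (X × X)) :
    (∃ s : U → C(I, X), Continuous s ∧
      (∀ p : U, s p 0 = (p : X × X).1) ∧ (∀ p : U, s p 1 = (p : X × X).2)) ↔
    VerticallyCompressible U := by
  constructor
  · rintro ⟨s, hs, h0, h1⟩
    refine ⟨fun q => s q.1 (σ q.2), ?_, fun p => ?_, fun p => ?_⟩
    · have h : Continuous fun q : U × I => (s q.1, σ q.2) := by fun_prop
      exact ContinuousEval.continuous_eval.comp h
    · simpa using h1 p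
    · simpa using h0 p
  · rintro ⟨h, hc, h0, h1⟩
    have hc' : Continuous fun q : U × I => h (q.1, σ q.2) := by fun_prop
    refine ⟨fun p => (ContinuousMap.curry ⟨_, hc'⟩) p, ContinuousMap.continuous _, fun p => ?_, fun p => ?_⟩
    · simpa using h1 p
    · simpa using h0 p
end

section
/- Let X be a topological space which is the increasing union X = ⋃_{i=1}^∞ X_i of closed subspaces X_i ⊆ X_{i+1}, such that for each i there exists an open set Y_i ⊆ X with X_i ⊆ Y_i and cl(Y_i) ⊆ int(X_{i+1}) (closure and interior taken in X). Let n be a positive integer and suppose that for every i the space X_i × X_i can be covered by n sets U_1^{(i)}, …, U_n^{(i)}, each open in the subspace X_i × X_i, such that for each j there is a continuous map h_j^{(i)} : U_j^{(i)} × [0,1] → X_i with h_j^{(i)}((x,y),0) = y and h_j^{(i)}((x,y),1) = x (i.e., each U_j^{(i)} is vertically compressible to the diagonal of X_i within X_i × X_i). Then X × X can be covered by 2n open subsets W_1, …, W_{2n} of X × X, each of which is vertically compressible to the diagonal Δ(X). -/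
open unitInterval

/-- Total form of vertical compressibility. -/
lemma vc_iff_aux {X : Type*} [TopologicalSpace X] (U : Set (X × X)) :
    VerticallyCompressible U ↔ ∃ g : (X × X) × I → X, ContinuousOn g (U ×ˢ Set.univ) ∧
      (∀ p ∈ U, g (p, 0) = p.2) ∧ (∀ p ∈ U, g (p, 1) = p.1) := by
  classical
  constructor
  · rintro ⟨h, hc, h0, h1⟩
    refine ⟨fun q => if hq : q.1 ∈ U then h (⟨q.1, hq⟩, q.2) else q.1.1, ?_, ?_, ?_⟩
    · rw [continuousOn_iff_continuous_restrict]
      have : Continuous (fun q : (U ×ˢ (Set.univ : Set I) : Set ((X × X) × I)) =>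
          h (⟨q.1.1, q.2.1⟩, q.1.2)) := by
        apply hc.comp
        fun_prop
      refine this.congr ?_
      rintro ⟨q, hq⟩
      simp [hq.1]
    · intro p hp
      simp [hp, h0]
    · intro p hp
      simp [hp, h1]
  · rintro ⟨g, hc, h0, h1⟩
    refine ⟨fun q => g (q.1.1, q.2), ?_, fun p => h0 _ p.2, fun p => h1 _ p.2⟩
    exact hc.comp_continuous (by fun_prop) (fun q => ⟨q.1.2, trivial⟩)

lemma vc_iUnion_aux {X ι : Type*} [TopologicalSpace X] (V : ι → Set (X × X))
    (ho : ∀ i, IsOpen (V i)) (hd : ∀ i j p, p ∈ V i → p ∈ V j → i = j)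
    (hv : ∀ i, VerticallyCompressible (V i)) : VerticallyCompressible (⋃ i, V i) := by
  classical
  simp only [vc_iff_aux] at hv ⊢
  choose g hc h0 h1 using hv
  let G : (X × X) × I → X := fun q =>
    if h : ∃ i, q.1 ∈ V i then g h.choose q else q.1.1
  have hG : ∀ i q, q.1 ∈ V i → G q = g i q := by
    intro i q hq
    have h : ∃ i, q.1 ∈ V i := ⟨i, hq⟩
    have : h.choose = i := hd _ _ _ h.choose_spec hq
    simp only [G, dif_pos h, this]
  refine ⟨G, ?_, ?_, ?_⟩
  · rw [Set.iUnion_prod_const]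
    apply ContinuousOn.iUnion_of_isOpen
    · intro i
      exact (hc i).congr (fun q hq => hG i q hq.1)
    · intro i
      exact (ho i).prod isOpen_univ
  · intro p hp
    obtain ⟨i, hi⟩ := Set.mem_iUnion.1 hp
    rw [hG i _ hi, h0 i _ hi]
  · intro p hp
    obtain ⟨i, hi⟩ := Set.mem_iUnion.1 hp
    rw [hG i _ hi, h1 i _ hi]

/-- The part of a subset of `A × A` lying in `D`, seen in `X × X`. -/
def pushAux {X : Type*} (A : Set X) (U : Set (A × A)) (D : Set (X × X)) : Set (X × X) :=
  {p | p ∈ D ∧ ∃ (h1 : p.1 ∈ A) (h2 : p.2 ∈ A), ((⟨p.1, h1⟩, ⟨p.2, h2⟩) : A × A) ∈ U}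

lemma pushAux_open {X : Type*} [TopologicalSpace X] (A : Set X) (U : Set (A × A))
    (D : Set (X × X)) (hU : IsOpen U) (hD : IsOpen D) (hDA : D ⊆ A ×ˢ A) :
    IsOpen (pushAux A U D) := by
  have hi : Topology.IsInducing (Prod.map (Subtype.val : A → X) (Subtype.val : A → X)) :=
    Topology.IsInducing.subtypeVal.prodMap Topology.IsInducing.subtypeVal
  obtain ⟨O, hO, rfl⟩ := hi.isOpen_iff.1 hU
  convert hD.inter hO using 1
  ext p
  constructor
  · rintro ⟨h, h1, h2, h3⟩
    exact ⟨h, h3⟩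
  · rintro ⟨h, h3⟩
    exact ⟨h, (hDA h).1, (hDA h).2, h3⟩

lemma pushAux_vc {X : Type*} [TopologicalSpace X] (A : Set X) (U : Set (A × A))
    (D : Set (X × X)) (hU : VerticallyCompressible U) :
    VerticallyCompressible (pushAux A U D) := by
  obtain ⟨h, hc, h0, h1⟩ := hU
  let f : pushAux A U D → U := fun p =>
    ⟨(⟨p.1.1, p.2.2.1⟩, ⟨p.1.2, p.2.2.2.1⟩), p.2.2.2.2⟩
  have hf : Continuous f := by
    dsimp only [f]
    fun_prop
  refine ⟨fun q => (h (f q.1, q.2) : X), ?_, ?_, ?_⟩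
  · fun_prop
  · intro p
    simp [h0, f]
  · intro p
    simp [h1, f]

/-- The sets `A (i-2) × A (i-2)`, empty for `i < 2`. -/
def shiftAux {X : Type*} (A : ℕ → Set X) : ℕ → Set (X × X)
  | 0 => ∅
  | 1 => ∅
  | (i + 2) => A i ×ˢ A i

/-- If `X = ⋃ᵢ Xᵢ` is an increasing union of closed subspaces such that for each `i` there is
an open `Yᵢ` with `Xᵢ ⊆ Yᵢ ⊆ cl(Yᵢ) ⊆ int(Xᵢ₊₁)`, and each `Xᵢ × Xᵢ` admits an open cover by
`n` sets vertically compressible to the diagonal of `Xᵢ` (i.e. `TC(Xᵢ) ≤ n`), then `X × X`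
admits an open cover by `2n` sets vertically compressible to the diagonal `Δ(X)`
(i.e. `TC(X) ≤ 2n`). -/
theorem tc_increasing_union_le {X : Type*} [TopologicalSpace X] (A : ℕ → Set X)
    (hclosed : ∀ i, IsClosed (A i))
    (hmono : ∀ i, A i ⊆ A (i + 1))
    (hunion : (⋃ i, A i) = Set.univ)
    (hY : ∀ i, ∃ Y : Set X, IsOpen Y ∧ A i ⊆ Y ∧ closure Y ⊆ interior (A (i + 1)))
    (n : ℕ) (hn : 0 < n)
    (hTC : ∀ i, ∃ U : Fin n → Set (A i × A i),
      (∀ j, IsOpen (U j)) ∧ ((⋃ j, U j) = Set.univ) ∧ ∀ j, VerticallyCompressible (U j)) :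
    ∃ W : Fin (2 * n) → Set (X × X),
      (∀ k, IsOpen (W k)) ∧ ((⋃ k, W k) = Set.univ) ∧ ∀ k, VerticallyCompressible (W k) := by
  have hint : ∀ i, A i ⊆ interior (A (i + 1)) := by
    intro i
    obtain ⟨Y, _, h1, h2⟩ := hY i
    exact h1.trans (subset_closure.trans h2)
  have hm : Monotone A := monotone_nat_of_le_succ hmono
  choose U hUo hUc hUv using hTC
  let L : ℕ → Set (X × X) := fun i =>
    (interior (A i) ×ˢ interior (A i)) \ shiftAux A i
  have hLo : ∀ i, IsOpen (L i) := by
    intro i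
    refine (isOpen_interior.prod isOpen_interior).sdiff ?_
    match i with
    | 0 => exact isClosed_empty
    | 1 => exact isClosed_empty
    | (i + 2) => exact (hclosed i).prod (hclosed i)
  have hLA : ∀ i, L i ⊆ A i ×ˢ A i := fun i p hp =>
    ⟨interior_subset hp.1.1, interior_subset hp.1.2⟩
  have hLd : ∀ i j p, i + 2 ≤ j → p ∈ L i → p ∈ L j → False := by
    intro i j p hij hi hj
    obtain ⟨k, rfl⟩ : ∃ k, j = k + 2 := ⟨j - 2, by omega⟩
    have hik : i ≤ k := by omega
    exact hj.2 ⟨hm hik (hLA i hi).1, hm hik (hLA i hi).2⟩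
  have hLc : ∀ p, ∃ i, p ∈ L i := by
    classical
    intro p
    have hex : ∃ i, p ∈ interior (A i) ×ˢ interior (A i) := by
      obtain ⟨a, ha⟩ := Set.mem_iUnion.1 (hunion ▸ Set.mem_univ p.1)
      obtain ⟨b, hb⟩ := Set.mem_iUnion.1 (hunion ▸ Set.mem_univ p.2)
      exact ⟨max a b + 1, hint _ (hm (le_max_left a b) ha), hint _ (hm (le_max_right a b) hb)⟩
    refine ⟨Nat.find hex, Nat.find_spec hex, ?_⟩
    have hmin := fun m => Nat.find_min (m := m) hex
    generalize Nat.find hex = i at hmin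
    match i with
    | 0 => exact fun h => h
    | 1 => exact fun h => h
    | (i + 2) => exact fun h => hmin (i + 1) (by omega) ⟨hint _ h.1, hint _ h.2⟩
  let V : Fin 2 × Fin n → ℕ → Set (X × X) := fun k m =>
    pushAux (A (2 * m + k.1)) (U (2 * m + k.1) k.2) (L (2 * m + k.1))
  have hVo : ∀ k m, IsOpen (V k m) := fun k m =>
    pushAux_open _ _ _ (hUo _ _) (hLo _) (hLA _)
  refine ⟨fun k => ⋃ m, V (finProdFinEquiv.symm k) m, fun k => isOpen_iUnion (hVo _), ?_, ?_⟩
  · refine Set.eq_univ_of_forall fun p => ?_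
    obtain ⟨i, hi⟩ := hLc p
    have hp := hLA i hi
    obtain ⟨j, hj⟩ := Set.mem_iUnion.1
      ((hUc i).symm ▸ Set.mem_univ ((⟨p.1, hp.1⟩, ⟨p.2, hp.2⟩) : A i × A i))
    obtain ⟨m, b, rfl⟩ : ∃ (m : ℕ) (b : Fin 2), i = 2 * m + b :=
      ⟨i / 2, ⟨i % 2, by omega⟩, by simp only; omega⟩
    refine Set.mem_iUnion.2 ⟨finProdFinEquiv (b, j), Set.mem_iUnion.2 ⟨m, ?_⟩⟩
    rw [Equiv.symm_apply_apply]
    exact ⟨hi, hp.1, hp.2, hj⟩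
  · intro k
    refine vc_iUnion_aux _ (hVo _) ?_ (fun m => pushAux_vc _ _ _ (hUv _ _))
    intro a b p ha hb
    rcases lt_trichotomy a b with h | h | h
    · exact (hLd _ _ p (by omega) ha.1 hb.1).elim
    · exact h
    · exact (hLd _ _ p (by omega) hb.1 ha.1).elim
end

section
/- Let p : E → B be a continuous map of topological spaces with a continuous section s : B → E (so p ∘ s = id_B). Suppose E = ⋃_{i=1}^∞ E_i is an increasing union of closed subspaces E_i ⊆ E_{i+1} such that s(p(E_i)) ⊆ E_i for every i, and such that for each i there exists an open set Y_i ⊆ E with E_i ⊆ Y_i and cl(Y_i) ⊆ int(E_{i+1}). Let n be a positive integer and suppose that for every i the subspace E_i can be covered by n sets U_1^{(i)}, …, U_n^{(i)}, each open in E_i, such that for each j there is a continuous homotopy H_j^{(i)} : U_j^{(i)} × [0,1] → E_i with H_j^{(i)}(e,0) = e, p(H_j^{(i)}(e,t)) = p(e) for all t, and H_j^{(i)}(e,1) = s(p(e)). Then E can be covered by 2n open subsets W_1, …, W_{2n} of E such that for each k there is a continuous homotopy H_k : W_k × [0,1] → E with H_k(e,0) = e, p(H_k(e,t)) = p(e)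 for all t, and H_k(e,1) = s(p(e)). -/
open unitInterval

/-- Fibrewise compressibility, with the homotopy given by a total function. -/
def FibComp {E B : Type*} [TopologicalSpace E] (p : E → B) (s : B → E) (W : Set E) : Prop :=
  ∃ h : E × I → E, ContinuousOn h (W ×ˢ Set.univ) ∧ ∀ e ∈ W,
    h (e, 0) = e ∧ (∀ t, p (h (e, t)) = p e) ∧ h (e, 1) = s (p e)

theorem FibComp.iUnion {E B : Type*} [TopologicalSpace E] {p : E → B} {s : B → E}
    {W : ℕ → Set E} (hW : ∀ i, IsOpen (W i)) (hd : ∀ i j e, e ∈ W i → e ∈ W j → i = j)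
    (h : ∀ i, FibComp p s (W i)) : FibComp p s (⋃ i, W i) := by
  classical
  choose h hc hh using h
  let f : E → ℕ := fun e => if he : ∃ i, e ∈ W i then he.choose else 0
  have hf : ∀ i, ∀ e ∈ W i, f e = i := by
    intro i e he
    have hex : ∃ i, e ∈ W i := ⟨i, he⟩
    have : f e = hex.choose := dif_pos hex
    rw [this]
    exact hd _ _ e hex.choose_spec he
  refine ⟨fun x => h (f x.1) x, ?_, ?_⟩
  · rintro ⟨e, t⟩ ⟨he, -⟩
    obtain ⟨i, hi⟩ := Set.mem_iUnion.1 he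
    have ho : W i ×ˢ (Set.univ : Set I) ∈ nhds (e, t) :=
      ((hW i).prod isOpen_univ).mem_nhds ⟨hi, trivial⟩
    have h1 : ContinuousAt (h i) (e, t) := (hc i).continuousAt ho
    refine (h1.congr ?_).continuousWithinAt
    filter_upwards [ho] with x hx
    rw [hf i x.1 hx.1]
  · intro e he
    obtain ⟨i, hi⟩ := Set.mem_iUnion.1 he
    simp only [hf i e hi]
    exact hh i e hi

theorem FibComp.of_sub {E B : Type*} [TopologicalSpace E] {p : E → B} {s : B → E}
    {A : Set E} {U : Set A} (V : Set E) (hV : ∀ e ∈ V, ∃ h : e ∈ A, (⟨e, h⟩ : A) ∈ U)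
    (H : U × I → A) (hH : Continuous H)
    (h0 : ∀ e : U, (H (e, 0) : E) = ((e : A) : E))
    (h1 : ∀ (e : U) (t : I), p (H (e, t) : E) = p ((e : A) : E))
    (h2 : ∀ e : U, (H (e, 1) : E) = s (p ((e : A) : E))) : FibComp p s V := by
  classical
  let g : E × I → E := fun x =>
    if h : ∃ h : x.1 ∈ A, (⟨x.1, h⟩ : A) ∈ U then (H (⟨⟨x.1, h.1⟩, h.2⟩, x.2) : E) else x.1
  have hg : ∀ e (he : e ∈ V) t, g (e, t) = H (⟨⟨e, (hV e he).1⟩, (hV e he).2⟩, t) :=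
    fun e he t => dif_pos (hV e he)
  refine ⟨g, ?_, ?_⟩
  · rw [continuousOn_iff_continuous_domRestrict]
    have : (V ×ˢ Set.univ).domRestrict g = fun x : (V ×ˢ (Set.univ : Set I) : Set (E × I)) =>
        (H (⟨⟨x.1.1, (hV _ x.2.1).1⟩, (hV _ x.2.1).2⟩, x.1.2) : E) := by
      ext ⟨⟨e, t⟩, he⟩
      exact hg e he.1 t
    rw [this]
    fun_prop
  · intro e he
    refine ⟨?_, fun t => ?_, ?_⟩
    · rw [hg e he, h0]
    · rw [hg e he, h1]
    · rw [hg e he, h2]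

/-- Fibrewise version: if `E = ⋃ᵢ Eᵢ` is an increasing union of closed subspaces of a
fibrewise pointed space `p : E → B` with section `s`, with `s(p(Eᵢ)) ⊆ Eᵢ`, interlacing open
sets `Yᵢ` with `Eᵢ ⊆ Yᵢ ⊆ cl(Yᵢ) ⊆ int(Eᵢ₊₁)`, and each `Eᵢ` admits an open cover by `n` sets
fibrewise compressible to the section within `Eᵢ` (i.e. `cat*_{Bᵢ}(Eᵢ) ≤ n`), then `E` admits
an open cover by `2n` sets fibrewise compressible to the section (i.e. `cat*_B(E) ≤ 2n`). -/
theorem fibrewise_cat_increasing_union_le {E B : Type*} [TopologicalSpace E]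
    [TopologicalSpace B] (p : E → B) (s : B → E) (hp : Continuous p) (hs : Continuous s)
    (hsec : ∀ b, p (s b) = b)
    (A : ℕ → Set E)
    (hclosed : ∀ i, IsClosed (A i))
    (hmono : ∀ i, A i ⊆ A (i + 1))
    (hunion : (⋃ i, A i) = Set.univ)
    (hsA : ∀ i, ∀ e ∈ A i, s (p e) ∈ A i)
    (hY : ∀ i, ∃ Y : Set E, IsOpen Y ∧ A i ⊆ Y ∧ closure Y ⊆ interior (A (i + 1)))
    (n : ℕ) (hn : 0 < n)
    (hcat : ∀ i, ∃ U : Fin n → Set (A i),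
      (∀ j, IsOpen (U j)) ∧ ((⋃ j, U j) = Set.univ) ∧
      ∀ j, ∃ H : U j × I → A i, Continuous H ∧
        (∀ e : U j, (H (e, 0) : E) = ((e : A i) : E)) ∧
        (∀ (e : U j) (t : I), p (H (e, t) : E) = p ((e : A i) : E)) ∧
        (∀ e : U j, (H (e, 1) : E) = s (p ((e : A i) : E)))) :
    ∃ W : Fin (2 * n) → Set E,
      (∀ k, IsOpen (W k)) ∧ ((⋃ k, W k) = Set.univ) ∧
      ∀ k, ∃ H : W k × I → E, Continuous H ∧
        (∀ e : W k, H (e, 0) = (e : E)) ∧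
        (∀ (e : W k) (t : I), p (H (e, t)) = p (e : E)) ∧
        (∀ e : W k, H (e, 1) = s (p (e : E))) := by
  classical
  have hle : ∀ i j, i ≤ j → A i ⊆ A j := fun i j h => monotone_nat_of_le_succ hmono h
  choose U hUo hUc H hHc hH0 hH1 hH2 using hcat
  let V : ℕ → Set E := fun i => interior (A (i + 1)) \ ⋃ k ∈ Finset.range i, A k
  have hVo : ∀ i, IsOpen (V i) := fun i =>
    isOpen_interior.sdiff (isClosed_biUnion_finset fun k _ => hclosed k)
  have hVcov : ∀ e, ∃ i, e ∈ V i := by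
    intro e
    have hex : ∃ i, e ∈ A i := Set.mem_iUnion.1 (hunion ▸ Set.mem_univ e)
    refine ⟨Nat.find hex, ?_, ?_⟩
    · obtain ⟨Y, -, h1, h2⟩ := hY (Nat.find hex)
      exact h2 (subset_closure (h1 (Nat.find_spec hex)))
    · simp only [Set.mem_iUnion, not_exists, Finset.mem_range]
      exact fun k hk => Nat.find_min hex hk
  have hVd : ∀ i j e, e ∈ V i → e ∈ V j → ¬ i + 1 < j := by
    intro i j e hi hj hij
    exact hj.2 (Set.mem_biUnion (Finset.mem_coe.2 (Finset.mem_range.2 hij))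
      (interior_subset hi.1))
  let P : ℕ → Fin n → Set E := fun i j => V i ∩ Set.image (Subtype.val : A (i + 1) → E) (U (i + 1) j)
  have hPo : ∀ i j, IsOpen (P i j) := by
    intro i j
    obtain ⟨O, hO, hOU⟩ := isOpen_induced_iff.1 (hUo (i + 1) j)
    have : P i j = V i ∩ O := by
      ext e
      constructor
      · rintro ⟨h, ⟨x, hx, rfl⟩⟩
        rw [← hOU] at hx
        exact ⟨h, hx⟩
      · rintro ⟨h, hx⟩
        refine ⟨h, ⟨e, interior_subset h.1⟩, ?_, rfl⟩
        rw [← hOU]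
        exact hx
    rw [this]
    exact (hVo i).inter hO
  have hPc : ∀ i j, FibComp p s (P i j) := fun i j =>
    FibComp.of_sub (P i j) (by rintro e ⟨-, ⟨x, hx, rfl⟩⟩; exact ⟨x.2, hx⟩)
      (H (i + 1) j) (hHc _ _) (hH0 _ _) (hH1 _ _) (hH2 _ _)
  let W : Fin 2 × Fin n → Set E := fun q => ⋃ i : ℕ, P (2 * i + q.1) q.2
  have hWc : ∀ q, FibComp p s (W q) := by
    intro q
    refine FibComp.iUnion (fun i => hPo _ _) ?_ (fun i => hPc _ _)
    intro i j e hi hj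
    have h1 := hVd _ _ e hi.1 hj.1
    have h2 := hVd _ _ e hj.1 hi.1
    omega
  refine ⟨fun k => W (finProdFinEquiv.symm k), fun k => isOpen_iUnion fun i => hPo _ _, ?_, ?_⟩
  · rw [Set.eq_univ_iff_forall]
    intro e
    obtain ⟨i, hi⟩ := hVcov e
    have he : (⟨e, interior_subset hi.1⟩ : A (i + 1)) ∈ ⋃ j, U (i + 1) j := by
      rw [hUc]; trivial
    obtain ⟨j, hj⟩ := Set.mem_iUnion.1 he
    refine Set.mem_iUnion.2 ⟨finProdFinEquiv (⟨i % 2, Nat.mod_lt _ two_pos⟩, j), ?_⟩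
    rw [Equiv.symm_apply_apply]
    refine Set.mem_iUnion.2 ⟨i / 2, ?_⟩
    change e ∈ P (2 * (i / 2) + i % 2) j
    rw [Nat.div_add_mod]
    exact ⟨hi, _, hj, rfl⟩
  · intro k
    obtain ⟨h, hc, hh⟩ := hWc (finProdFinEquiv.symm k)
    refine ⟨fun x => h (x.1, x.2), ?_, fun e => (hh e e.2).1, fun e => (hh e e.2).2.1,
      fun e => (hh e e.2).2.2⟩
    exact hc.comp_continuous (by fun_prop) (fun x => ⟨x.1.2, trivial⟩)
end

section
/- Let (X_i)_{i≥1} be a sequence of topological spaces and f_i : X_i → X_{i+1} continuous maps, and let X be the mapping telescope of the sequence X_1 → X_2 → X_3 → …, that is, the quotient of the disjoint union ⨿_{i≥1} X_i × [0,1] by the identifications (x,1) ∈ X_i × [0,1] ∼ (f_i(x),0) ∈ X_{i+1} × [0,1], with the quotient topology. Let n be a positive integer and suppose that for every i the space X_i × X_i can be covered by n open (in X_i × X_i) sets, each vertically compressible to the diagonal of X_i within X_i × X_i. Then X × X can be covered by 2n open subsets of X × X, each vertically compressible to the diagonal Δ(X). -/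
open unitInterval

/-- The gluing relation for the mapping telescope of a sequence of maps
`X₁ → X₂ → X₃ → ⋯`: the point `(x, 1)` of the `i`-th cylinder is identified with the point
`(fᵢ x, 0)` of the `(i+1)`-st cylinder. -/
inductive TelescopeRel (X : ℕ → Type*) (f : ∀ i, X i → X (i + 1)) :
    (Σ i, X i × I) → (Σ i, X i × I) → Prop
  | glue (i : ℕ) (x : X i) : TelescopeRel X f ⟨i, x, 1⟩ ⟨i + 1, f i x, 0⟩

/-- The mapping telescope of a sequence of maps `X₁ → X₂ → X₃ → ⋯`, i.e. the quotient of
`⨿ᵢ Xᵢ × [0,1]` by the identifications `(x,1) ∼ (fᵢ x, 0)`, with the quotient topology. -/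
def Telescope (X : ℕ → Type*) [∀ i, TopologicalSpace (X i)]
    (f : ∀ i, X i → X (i + 1)) : Type _ :=
  Quot (TelescopeRel X f)

instance (X : ℕ → Type*) [∀ i, TopologicalSpace (X i)] (f : ∀ i, X i → X (i + 1)) :
    TopologicalSpace (Telescope X f) :=
  instTopologicalSpaceQuot


namespace TelescopeTC

set_option linter.unusedSectionVars false

open Topology

/-- Disjoint unions of open compressible sets are compressible. -/
theorem compressible_iUnion {Y ι : Type*} [TopologicalSpace Y] (V : ι → Set (Y × Y))
    (hV : ∀ i, IsOpen (V i)) (hd : ∀ i j q, q ∈ V i → q ∈ V j → i = j)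
    (hc : ∀ i, VerticallyCompressible (V i)) : VerticallyCompressible (⋃ i, V i) := by
  choose h hcont h0 h1 using hc
  let S : ι → Set ((⋃ i, V i : Set (Y × Y)) × I) := fun i => {q | (q.1 : Y × Y) ∈ V i}
  have hSo : ∀ i, IsOpen (S i) := fun i => (hV i).preimage (by fun_prop)
  let φ : ∀ i, C(S i, Y) := fun i =>
    ⟨fun q => h i (⟨q.1.1.1, q.2⟩, q.1.2), (hcont i).comp (by fun_prop)⟩
  have hφ : ∀ (i j : ι) (x) (hxi : x ∈ S i) (hxj : x ∈ S j),
      (φ i) ⟨x, hxi⟩ = (φ j) ⟨x, hxj⟩ := by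
    intro i j x hxi hxj
    obtain rfl := hd i j _ hxi hxj
    rfl
  have hS : ∀ x, ∃ i, S i ∈ nhds x := by
    intro x
    obtain ⟨i, hi⟩ := Set.mem_iUnion.1 x.1.2
    exact ⟨i, (hSo i).mem_nhds hi⟩
  refine ⟨ContinuousMap.liftCover S φ hφ hS, (ContinuousMap.liftCover S φ hφ hS).continuous,
    ?_, ?_⟩
  · intro p
    obtain ⟨i, hi⟩ := Set.mem_iUnion.1 p.2
    have := ContinuousMap.liftCover_coe (hφ := hφ) (hS := hS) (i := i) ⟨(p, 0), hi⟩
    exact this.trans (h0 i ⟨p.1, hi⟩)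
  · intro p
    obtain ⟨i, hi⟩ := Set.mem_iUnion.1 p.2
    have := ContinuousMap.liftCover_coe (hφ := hφ) (hS := hS) (i := i) ⟨(p, 1), hi⟩
    exact this.trans (h1 i ⟨p.1, hi⟩)

variable {X : ℕ → Type*} [∀ i, TopologicalSpace (X i)] (f : ∀ i, X i → X (i + 1))

/-- The class of a point of a cylinder. -/
def mk (s : Σ i, X i × I) : Telescope X f := Quot.mk _ s

theorem isQuotientMap_mk : IsQuotientMap (mk f) := isQuotientMap_quot_mk

theorem mk_glue (i : ℕ) (x : X i) : mk f ⟨i, x, 1⟩ = mk f ⟨i + 1, f i x, 0⟩ :=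
  Quot.sound (TelescopeRel.glue i x)

/-- Iterates of the bonding maps. -/
def push {k i : ℕ} (h : k ≤ i) (x : X k) : X i := Nat.leRecOn h (fun {j} => f j) x

theorem push_self {k : ℕ} (x : X k) : push f le_rfl x = x := Nat.leRecOn_self x

theorem push_succ {k i : ℕ} (h : k ≤ i) (h' : k ≤ i + 1) (x : X k) :
    push f h' x = f i (push f h x) := Nat.leRecOn_succ h x

theorem push_f {k i : ℕ} (h : k + 1 ≤ i) (h' : k ≤ i) (x : X k) :
    push f h (f k x) = push f h' x := Nat.leRecOn_succ_left (next := fun {j} => f j) x h' h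

theorem continuous_push (hf : ∀ i, Continuous (f i)) {k i : ℕ} (h : k ≤ i) :
    Continuous (push f h) := by
  induction i, h using Nat.le_induction with
  | base =>
    have : push f (le_refl k) = id := funext fun x => push_self f x
    rw [this]; exact continuous_id
  | succ i h ih =>
    have : push f (Nat.le_succ_of_le h) = f i ∘ push f h := funext fun x => push_succ f h _ x
    rw [this]; exact (hf i).comp ih

/-- Height on the cylinders. -/
def ht0 (s : Σ i, X i × I) : ℝ := s.1 + s.2.2

/-- The height function of the telescope. -/
def ht : Telescope X f → ℝ := Quot.lift ht0 (by
  rintro _ _ ⟨i, x⟩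
  simp [ht0])

@[simp] theorem ht_mk (s) : ht f (mk f s) = ht0 s := rfl

theorem continuous_ht : Continuous (ht f) := by
  rw [(isQuotientMap_mk f).continuous_iff]
  refine continuous_sigma fun i => ?_
  change Continuous fun p : X i × I => ((i : ℝ) + (p.2 : ℝ))
  fun_prop

theorem ht0_nonneg (s : Σ i, X i × I) : 0 ≤ ht0 s :=
  add_nonneg (Nat.cast_nonneg _) s.2.2.2.1

theorem ht_nonneg (a) : 0 ≤ ht f a := by
  obtain ⟨s, rfl⟩ := (isQuotientMap_mk f).surjective a
  exact ht0_nonneg s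

theorem le_of_ht0 {s : Σ i, X i × I} {i : ℕ} (h : ht0 s < i + 1) : s.1 ≤ i := by
  have h0 : (0 : ℝ) ≤ s.2.2 := s.2.2.2.1
  have : (s.1 : ℝ) < i + 1 := by unfold ht0 at h; linarith
  exact Nat.lt_succ_iff.1 (by exact_mod_cast this)

/-- The lower part of the telescope. -/
def D (i : ℕ) : Set (Telescope X f) := {a | ht f a < i + 1}

theorem isOpen_D (i : ℕ) : IsOpen (D f i) := isOpen_lt (continuous_ht f) continuous_const

open Classical in
/-- Auxiliary option valued retraction. -/
noncomputable def rhoO (i : ℕ) : Telescope X f → Option (X i) :=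
  Quot.lift (fun s => if h : ht0 s < i + 1 then some (push f (le_of_ht0 h) s.2.1) else none) (by
    rintro _ _ ⟨k, x⟩
    have e : ht0 (X := X) ⟨k, x, 1⟩ = ht0 ⟨k + 1, f k x, 0⟩ := by simp [ht0]
    by_cases h : ht0 (X := X) ⟨k, x, 1⟩ < i + 1
    · have h' := h
      rw [e] at h'
      rw [dif_pos h, dif_pos h']
      congr 1
      exact (push_f f _ _ x).symm
    · have h' := h
      rw [e] at h'
      rw [dif_neg h, dif_neg h'])

theorem rhoO_mk {i : ℕ} {s : Σ i, X i × I} (h : ht0 s < i + 1) :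
    rhoO f i (mk f s) = some (push f (le_of_ht0 h) s.2.1) := dif_pos h

theorem exists_rho (hf : ∀ i, Continuous (f i)) (i : ℕ) : ∃ ρ : C(D f i, X i),
    ∀ (s : Σ i, X i × I) (h : ht0 s < i + 1),
      ρ ⟨mk f s, h⟩ = push f (le_of_ht0 h) s.2.1 := by
  have hs : ∀ a : D f i, (rhoO f i a).isSome := by
    rintro ⟨a, ha⟩
    obtain ⟨s, rfl⟩ := (isQuotientMap_mk f).surjective a
    have := rhoO_mk f (i := i) (s := s) ha
    simp [this]
  have hval : ∀ (s : Σ i, X i × I) (h : ht0 s < i + 1),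
      (rhoO f i (mk f s)).get (hs ⟨mk f s, h⟩) = push f (le_of_ht0 h) s.2.1 := by
    intro s h
    simp [rhoO_mk f h]
  refine ⟨⟨fun a => (rhoO f i a).get (hs a), ?_⟩, hval⟩
  rw [((isQuotientMap_mk f).restrictPreimage_isOpen (isOpen_D f i)).continuous_iff]
  rw [continuous_iff_continuousAt]
  rintro ⟨⟨k, x⟩, hx⟩
  have hoe : IsOpenEmbedding (@Sigma.mk ℕ (fun i => X i × I) k) := IsOpenEmbedding.sigmaMk
  have hoe' := hoe.restrictPreimage (mk f ⁻¹' D f i)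
  refine (hoe'.continuousAt_iff (x := ⟨x, hx⟩)).1 (Continuous.continuousAt ?_)
  have hk : k ≤ i := le_of_ht0 (s := ⟨k, x⟩) hx
  have : Continuous fun p : (@Sigma.mk ℕ (fun i => X i × I) k ⁻¹' (mk f ⁻¹' D f i) : Set (X k × I)) =>
      push f hk p.1.1 := (continuous_push f hf hk).comp (by fun_prop)
  refine this.congr ?_
  rintro ⟨y, hy⟩
  exact (hval ⟨k, y⟩ hy).symm

/-- Truncation to the unit interval. -/
noncomputable def tr (u : ℝ) : I := Set.projIcc 0 1 zero_le_one u

theorem continuous_tr : Continuous tr := continuous_projIcc (h := zero_le_one)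

theorem tr_nonpos {u : ℝ} (h : u ≤ 0) : tr u = 0 := Set.projIcc_of_le_left _ h

theorem tr_one_le {u : ℝ} (h : 1 ≤ u) : tr u = 1 := Set.projIcc_of_right_le _ h

theorem tr_coe (t : I) : tr (t : ℝ) = t := Set.projIcc_val _ t

theorem max_one' (r : I) : max r 1 = 1 := max_eq_right (Subtype.mk_le_mk.2 r.2.2)

theorem one_max' (r : I) : max 1 r = 1 := max_eq_left (Subtype.mk_le_mk.2 r.2.2)

theorem zero_max' (r : I) : max 0 r = r := max_eq_right (Subtype.mk_le_mk.2 r.2.1)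

/-- The elementary homotopy on cylinders. -/
noncomputable def K0 (m : ℕ) (r : I) (s : Σ i, X i × I) : Telescope X f :=
  if h : s.1 ≤ m then mk f ⟨m, push f h s.2.1, max r (tr (ht0 s - m))⟩ else mk f s

/-- The elementary homotopy on the telescope. -/
noncomputable def K (m : ℕ) (r : I) : Telescope X f → Telescope X f :=
  Quot.lift (K0 f m r) (by
    rintro _ _ ⟨k, x⟩
    have e : ht0 (X := X) ⟨k, x, 1⟩ = ht0 ⟨k + 1, f k x, 0⟩ := by simp [ht0]
    unfold K0
    rw [e]
    rcases lt_trichotomy k m with h | h | h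
    · rw [dif_pos h.le, dif_pos (show k + 1 ≤ m from h)]
      simp only
      rw [push_f f _ h.le]
    · subst h
      rw [dif_pos le_rfl, dif_neg (by simp)]
      simp only
      rw [push_self, tr_one_le (by simp [ht0]), max_one']
      exact mk_glue f k x
    · rw [dif_neg (by simpa using h), dif_neg (by simp; omega)]
      exact mk_glue f k x)

theorem K_mk (m : ℕ) (r : I) (s) : K f m r (mk f s) = K0 f m r s := rfl

theorem continuous_mk_comp (k : ℕ) {Z : Type*} [TopologicalSpace Z] {g : Z → X k × I}
    (hg : Continuous g) : Continuous fun z => mk f ⟨k, g z⟩ :=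
  (isQuotientMap_mk f).continuous.comp (continuous_sigmaMk.comp hg)

theorem continuous_K (hf : ∀ i, Continuous (f i)) (m : ℕ) :
    Continuous fun p : Telescope X f × I => K f m p.2 p.1 := by
  refine (isQuotientMap_mk f).continuous_lift_prod_left ?_
  simp only [K_mk]
  rw [← (Homeomorph.sigmaProdDistrib (Y := I) (X := fun i => X i × I)).symm.comp_continuous_iff']
  refine continuous_sigma fun k => ?_
  by_cases h : k ≤ m
  · have : Continuous fun q : (X k × I) × I =>
        mk f ⟨m, push f h q.1.1, max q.2 (tr (((k : ℝ) + (q.1.2 : ℝ)) - m))⟩ := by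
      refine continuous_mk_comp f m (g := fun q : (X k × I) × I => (push f h q.1.1, max q.2 (tr (((k : ℝ) + (q.1.2 : ℝ)) - m)))) ?_
      refine ((continuous_push f hf h).comp (by fun_prop)).prodMk
        (Continuous.max continuous_snd (continuous_tr.comp (by fun_prop)))
    refine this.congr fun q => ?_
    exact (dif_pos h : K0 f m q.2 ⟨k, q.1⟩ = _).symm
  · refine (continuous_mk_comp f k (g := fun q : (X k × I) × I => q.1) continuous_fst).congr
      fun q => ?_
    exact (dif_neg h : K0 f m q.2 ⟨k, q.1⟩ = _).symm

/-- The map compressing everything below level `m` to level `m`. -/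
noncomputable def S (hf : ∀ i, Continuous (f i)) (m : ℕ) : C(Telescope X f, Telescope X f) :=
  ⟨K f m 0, (continuous_K f hf m).comp (by fun_prop : Continuous fun a => (a, (0 : I)))⟩

theorem S_zero (hf : ∀ i, Continuous (f i)) : S f hf 0 = ContinuousMap.id _ := by
  ext a
  obtain ⟨⟨k, x, t⟩, rfl⟩ := (isQuotientMap_mk f).surjective a
  change K0 f 0 0 _ = mk f _
  by_cases h : k ≤ 0
  · obtain rfl : k = 0 := by omega
    refine (dif_pos h).trans ?_
    simp only [ht0]
    rw [push_self, zero_max']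
    simp [tr_coe]
  · exact dif_neg h

theorem K_one (m : ℕ) (a) : K f m 1 a = K f (m + 1) 0 a := by
  obtain ⟨⟨k, x, t⟩, rfl⟩ := (isQuotientMap_mk f).surjective a
  rw [K_mk, K_mk]
  unfold K0
  rcases lt_trichotomy k (m + 1) with h | h | h
  · have h1 : k ≤ m := by omega
    rw [dif_pos h1, dif_pos h.le]
    simp only
    have h2 : ht0 (X := X) ⟨k, x, t⟩ - ((m + 1 : ℕ) : ℝ) ≤ 0 := by
      have : (k : ℝ) ≤ m := by exact_mod_cast h1
      have := t.2.2
      simp only [ht0]; push_cast; linarith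
    rw [tr_nonpos h2, max_self, one_max', mk_glue,
      push_succ f h1]
  · subst h
    rw [dif_neg (by simp), dif_pos le_rfl]
    simp only [ht0]
    rw [push_self, zero_max']
    simp [tr_coe]
  · rw [dif_neg (by simp; omega), dif_neg (by simp; omega)]

theorem S_homotopic (hf : ∀ i, Continuous (f i)) (m : ℕ) :
    (ContinuousMap.id _).Homotopic (S f hf m) := by
  induction m with
  | zero => rw [S_zero]
  | succ m ih =>
    refine ih.trans ⟨⟨⟨fun p => K f m p.1 p.2, ?_⟩, fun a => rfl, fun a => K_one f m a⟩⟩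
    exact (continuous_K f hf m).comp (by fun_prop : Continuous fun p : I × _ => (p.2, p.1))

/-- The inclusion of `X i` at level `i`. -/
def inc (i : ℕ) : C(X i, Telescope X f) :=
  ⟨fun x => mk f ⟨i, x, 0⟩, continuous_mk_comp f i (g := fun x => (x, 0)) (by fun_prop)⟩

/-- The inclusion of the lower part. -/
def incD (i : ℕ) : C(D f i, Telescope X f) := ⟨Subtype.val, continuous_subtype_val⟩

theorem exists_retraction (hf : ∀ i, Continuous (f i)) (i : ℕ) : ∃ ρ : C(D f i, X i),
    (incD f i).Homotopic ((inc f i).comp ρ) := by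
  obtain ⟨ρ, hρ⟩ := exists_rho f hf i
  refine ⟨ρ, ?_⟩
  have h1 : (incD f i).Homotopic ((S f hf i).comp (incD f i)) :=
    (S_homotopic f hf i).comp (ContinuousMap.Homotopic.refl (incD f i))
  refine h1.trans ⟨⟨⟨fun p => mk f ⟨i, ρ p.2, σ p.1 * tr (ht f p.2 - i)⟩, ?_⟩, ?_, ?_⟩⟩
  · refine continuous_mk_comp f i
      (g := fun p : I × D f i => (ρ p.2, σ p.1 * tr (ht f p.2 - i))) ?_
    refine (ρ.continuous.comp continuous_snd).prodMk ?_
    refine Continuous.mul (by fun_prop) (continuous_tr.comp ?_)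
    exact ((continuous_ht f).comp (by fun_prop)).sub continuous_const
  · rintro ⟨a, ha⟩
    obtain ⟨s, rfl⟩ := (isQuotientMap_mk f).surjective a
    have e : K0 f i 0 s = mk f ⟨i, push f (le_of_ht0 ha) s.2.1, max 0 (tr (ht0 s - i))⟩ :=
      dif_pos (le_of_ht0 ha)
    rw [zero_max'] at e
    change mk f ⟨i, ρ ⟨mk f s, ha⟩, σ 0 * tr (ht0 s - i)⟩ = K0 f i 0 s
    rw [e, hρ s ha]
    simp
  · rintro a
    change mk f ⟨i, ρ a, σ 1 * tr (ht f a - i)⟩ = mk f ⟨i, ρ a, 0⟩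
    simp

theorem compressible_of_homotopic {Y : Type*} [TopologicalSpace Y] {U : Set (Y × Y)}
    (h : ContinuousMap.Homotopic (⟨fun p => p.1.2, by fun_prop⟩ : C(U, Y))
      ⟨fun p => p.1.1, by fun_prop⟩) : VerticallyCompressible U := by
  obtain ⟨H⟩ := h
  exact ⟨fun p => H (p.2, p.1), by fun_prop, fun p => H.apply_zero p, fun p => H.apply_one p⟩

/-- The open sets of the cover. -/
theorem exists_piece (hf : ∀ i, Continuous (f i)) (i : ℕ) {ι : Type*} (U : ι → Set (X i × X i))
    (hU : ∀ j, IsOpen (U j)) (hcov : (⋃ j, U j) = Set.univ)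
    (hc : ∀ j, VerticallyCompressible (U j)) :
    ∃ V : ι → Set (Telescope X f × Telescope X f),
      (∀ j, IsOpen (V j)) ∧ (∀ j, VerticallyCompressible (V j)) ∧
      (⋃ j, V j) = {q | (i : ℝ) - 1 < max (ht f q.1) (ht f q.2) ∧
        max (ht f q.1) (ht f q.2) < i + 1} := by
  obtain ⟨ρ, hρ⟩ := exists_retraction f hf i
  let Q : Set (Telescope X f × Telescope X f) := {q | (i : ℝ) - 1 < max (ht f q.1) (ht f q.2) ∧
        max (ht f q.1) (ht f q.2) < i + 1}
  have hQ : IsOpen Q := by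
    have h1 := (continuous_ht f).comp (continuous_fst (X := Telescope X f) (Y := Telescope X f))
    have h2 := (continuous_ht f).comp (continuous_snd (X := Telescope X f) (Y := Telescope X f))
    exact (isOpen_lt continuous_const (h1.max h2)).inter (isOpen_lt (h1.max h2) continuous_const)
  let a : C(Q, D f i) := ⟨fun q => ⟨q.1.1, (max_lt_iff.1 q.2.2).1⟩, by fun_prop⟩
  let b : C(Q, D f i) := ⟨fun q => ⟨q.1.2, (max_lt_iff.1 q.2.2).2⟩, by fun_prop⟩
  let V : ι → Set (Telescope X f × Telescope X f) := fun j =>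
    Set.image Subtype.val {q : Q | (ρ (a q), ρ (b q)) ∈ U j}
  refine ⟨V, fun j => ?_, fun j => ?_, ?_⟩
  · exact hQ.isOpenMap_subtype_val _ ((hU j).preimage (by fun_prop))
  · apply compressible_of_homotopic
    have hVQ : ∀ q ∈ V j, q ∈ Q := by
      rintro _ ⟨q, -, rfl⟩; exact q.2
    let c : C(V j, Q) := ⟨fun q => ⟨q.1, hVQ _ q.2⟩, by fun_prop⟩
    have hcU : ∀ q : V j, (ρ (a (c q)), ρ (b (c q))) ∈ U j := by
      rintro ⟨_, ⟨q, hq, rfl⟩⟩; exact hq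
    obtain ⟨h, hcont, h0, h1⟩ := hc j
    have hmid : (ρ.comp (b.comp c)).Homotopic (ρ.comp (a.comp c)) := by
      refine ⟨⟨⟨fun p => h (⟨_, hcU p.2⟩, p.1), hcont.comp (by fun_prop)⟩, fun q => ?_, fun q => ?_⟩⟩
      · exact h0 ⟨_, hcU q⟩
      · exact h1 ⟨_, hcU q⟩
    have hb := hρ.comp (ContinuousMap.Homotopic.refl (b.comp c))
    have ha := hρ.comp (ContinuousMap.Homotopic.refl (a.comp c))
    have hm := (ContinuousMap.Homotopic.refl (inc f i)).comp hmid
    exact (hb.trans hm).trans ha.symm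
  · apply Set.Subset.antisymm
    · refine Set.iUnion_subset fun j => ?_
      rintro _ ⟨q, -, rfl⟩; exact q.2
    · intro q hq
      have : (ρ (a ⟨q, hq⟩), ρ (b ⟨q, hq⟩)) ∈ ⋃ j, U j := by rw [hcov]; trivial
      obtain ⟨j, hj⟩ := Set.mem_iUnion.1 this
      exact Set.mem_iUnion.2 ⟨j, ⟨q, hq⟩, hj, rfl⟩

end TelescopeTC

/-- If each `Xᵢ × Xᵢ` admits an open cover by `n` sets vertically compressible to the diagonal
of `Xᵢ` (i.e. `TC(Xᵢ) ≤ n`), then the square of the mapping telescope `X` of the sequence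
`X₁ → X₂ → X₃ → ⋯` admits an open cover by `2n` sets vertically compressible to the diagonal
`Δ(X)` (i.e. `TC(X) ≤ 2n`). -/
theorem tc_telescope_le (X : ℕ → Type*) [∀ i, TopologicalSpace (X i)]
    (f : ∀ i, X i → X (i + 1)) (hf : ∀ i, Continuous (f i))
    (n : ℕ) (hn : 0 < n)
    (hTC : ∀ i, ∃ U : Fin n → Set (X i × X i),
      (∀ j, IsOpen (U j)) ∧ ((⋃ j, U j) = Set.univ) ∧ ∀ j, VerticallyCompressible (U j)) :
    ∃ W : Fin (2 * n) → Set (Telescope X f × Telescope X f),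
      (∀ k, IsOpen (W k)) ∧ ((⋃ k, W k) = Set.univ) ∧ ∀ k, VerticallyCompressible (W k) := by
  choose U hU hcov hc using hTC
  choose V hV hVc hVu using fun i => TelescopeTC.exists_piece f hf i (U i) (hU i) (hcov i) (hc i)
  have hmem : ∀ i j q, q ∈ V i j → q ∈ ⋃ j, V i j := fun i j q h => Set.mem_iUnion.2 ⟨j, h⟩
  refine ⟨fun k => ⋃ m : ℕ, V (2 * m + (finProdFinEquiv.symm k).1) (finProdFinEquiv.symm k).2,
    fun k => isOpen_iUnion fun m => hV _ _, ?_, fun k => ?_⟩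
  · rw [Set.eq_univ_iff_forall]
    intro q
    have h0 : 0 ≤ max (TelescopeTC.ht f q.1) (TelescopeTC.ht f q.2) :=
      le_max_of_le_left (TelescopeTC.ht_nonneg f _)
    obtain ⟨i, hi⟩ : ∃ i : ℕ, q ∈ ⋃ j, V i j := by
      refine ⟨⌊max (TelescopeTC.ht f q.1) (TelescopeTC.ht f q.2)⌋₊, ?_⟩
      rw [hVu]
      exact ⟨by have := Nat.floor_le h0; linarith, Nat.lt_floor_add_one _⟩
    obtain ⟨j, hj⟩ := Set.mem_iUnion.1 hi
    refine Set.mem_iUnion.2 ⟨finProdFinEquiv (⟨i % 2, Nat.mod_lt _ two_pos⟩, j), ?_⟩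
    refine Set.mem_iUnion.2 ⟨i / 2, ?_⟩
    rw [Equiv.symm_apply_apply]
    simp only
    rw [Nat.div_add_mod]
    exact hj
  · refine TelescopeTC.compressible_iUnion _ (fun m => hV _ _) ?_ (fun m => hVc _ _)
    intro m m' q h h'
    have h := hmem _ _ _ h
    have h' := hmem _ _ _ h'
    rw [hVu] at h h'
    obtain ⟨h1, h2⟩ := h
    obtain ⟨h3, h4⟩ := h'
    push_cast at h1 h2 h3 h4
    have a1 : (m : ℝ) < m' + 1 := by linarith
    have a2 : (m' : ℝ) < m + 1 := by linarith
    have a1 : m < m' + 1 := by exact_mod_cast a1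
    have a2 : m' < m + 1 := by exact_mod_cast a2
    omega
end

section
/- Let X be a topological space with subsets X_i (i ≥ 1) satisfying X_i ⊆ X_{i+1}, and open sets Y_i ⊆ X with X_i ⊆ Y_i and cl(Y_i) ⊆ int(X_{i+1}) for every i. Define subsets of X × X by L_1 = int(X_1 × X_1), L_2 = int(X_2 × X_2), and L_i = int(X_i × X_i) \ cl(Y_{i-2} × Y_{i-2}) for i > 2 (interiors and closures taken in X × X). Then for all positive integers l and m with |l − m| ≥ 2 the sets L_l and L_m are disjoint. -/
/-- With `Xᵢ ⊆ Yᵢ ⊆ cl(Yᵢ) ⊆ int(Xᵢ₊₁)` and `L₁ = int(X₁ × X₁)`, `L₂ = int(X₂ × X₂)`,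
`Lᵢ = int(Xᵢ × Xᵢ) \ cl(Yᵢ₋₂ × Yᵢ₋₂)` for `i > 2` (interiors and closures taken in `X × X`),
the sets `Lₗ` and `Lₘ` are disjoint whenever `|l − m| ≥ 2`. -/
theorem L_disjoint {X : Type*} [TopologicalSpace X] (A Y : ℕ → Set X)
    (hmono : ∀ i, 1 ≤ i → A i ⊆ A (i + 1))
    (hYopen : ∀ i, 1 ≤ i → IsOpen (Y i))
    (hAY : ∀ i, 1 ≤ i → A i ⊆ Y i)
    (hYA : ∀ i, 1 ≤ i → closure (Y i) ⊆ interior (A (i + 1)))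
    (L : ℕ → Set (X × X))
    (hL1 : L 1 = interior (A 1 ×ˢ A 1))
    (hL2 : L 2 = interior (A 2 ×ˢ A 2))
    (hLi : ∀ i, 2 < i → L i = interior (A i ×ˢ A i) \ closure (Y (i - 2) ×ˢ Y (i - 2)))
    (l m : ℕ) (hl : 1 ≤ l) (hm : 1 ≤ m) (hlm : l + 2 ≤ m ∨ m + 2 ≤ l) :
    L l ∩ L m = ∅ := by
  have hA : ∀ i, 1 ≤ i → ∀ j, i ≤ j → A i ⊆ A j := by
    intro i hi j hij
    induction j, hij using Nat.le_induction with
    | base => exact subset_rfl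
    | succ k hk ih => exact ih.trans (hmono k (hi.trans hk))
  have hsub : ∀ i, 1 ≤ i → L i ⊆ A i ×ˢ A i := by
    intro i hi
    rcases (by omega : i = 1 ∨ i = 2 ∨ 2 < i) with h | h | h
    · subst h
      rw [hL1]
      exact interior_subset
    · subst h
      rw [hL2]
      exact interior_subset
    · rw [hLi i h]
      exact Set.diff_subset.trans interior_subset
  have key : ∀ a b, 1 ≤ a → a + 2 ≤ b → ∀ p, p ∈ L a → p ∈ L b → False := by
    intro a b ha hab p hpa hpb
    rw [hLi b (by omega)] at hpb
    have hs : A a ⊆ Y (b - 2) :=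
      (hA a ha (b - 2) (by omega)).trans (hAY (b - 2) (by omega))
    exact hpb.2 (subset_closure (Set.prod_mono hs hs (hsub a ha hpa)))
  rw [Set.eq_empty_iff_forall_notMem]
  rintro p ⟨h1, h2⟩
  rcases hlm with h | h
  · exact key l m hl h p h1 h2
  · exact key m l hm h p h2 h1
end

section
/- Let X be a topological space which is the increasing union X = ⋃_{i=1}^∞ X_i of subsets X_i ⊆ X_{i+1}, and suppose for each i there exists an open set Y_i ⊆ X with X_i ⊆ Y_i and cl(Y_i) ⊆ int(X_{i+1}). Define subsets of X × X by L_1 = int(X_1 × X_1), L_2 = int(X_2 × X_2), and L_i = int(X_i × X_i) \ cl(Y_{i-2} × Y_{i-2}) for i > 2 (interiors and closures taken in X × X). Then the sets L_i cover X × X: every point (x,y) ∈ X × X belongs to L_i for some i. -/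
/-- If `X = ⋃_{i ≥ 1} Xᵢ` with `Xᵢ ⊆ Yᵢ ⊆ cl(Yᵢ) ⊆ int(Xᵢ₊₁)`, then the sets
`L₁ = int(X₁ × X₁)`, `L₂ = int(X₂ × X₂)`, `Lᵢ = int(Xᵢ × Xᵢ) \ cl(Yᵢ₋₂ × Yᵢ₋₂)` for `i > 2`
(interiors and closures taken in `X × X`) cover `X × X`. -/
theorem L_covers {X : Type*} [TopologicalSpace X] (A Y : ℕ → Set X)
    (hmono : ∀ i, 1 ≤ i → A i ⊆ A (i + 1))
    (hunion : (⋃ i, ⋃ (_ : 1 ≤ i), A i) = Set.univ)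
    (hYopen : ∀ i, 1 ≤ i → IsOpen (Y i))
    (hAY : ∀ i, 1 ≤ i → A i ⊆ Y i)
    (hYA : ∀ i, 1 ≤ i → closure (Y i) ⊆ interior (A (i + 1)))
    (L : ℕ → Set (X × X))
    (hL1 : L 1 = interior (A 1 ×ˢ A 1))
    (hL2 : L 2 = interior (A 2 ×ˢ A 2))
    (hLi : ∀ i, 2 < i → L i = interior (A i ×ˢ A i) \ closure (Y (i - 2) ×ˢ Y (i - 2))) :
    ∀ p : X × X, ∃ i, 1 ≤ i ∧ p ∈ L i := by
  classical
  intro p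
  have mono : ∀ a b, 1 ≤ a → a ≤ b → A a ⊆ A b := by
    intro a b ha hab
    induction b, hab using Nat.le_induction with
    | base => exact subset_rfl
    | succ n hn ih => exact ih.trans (hmono n (ha.trans hn))
  have hex : ∀ x : X, ∃ i, 1 ≤ i ∧ x ∈ A i := by
    intro x
    have hx : x ∈ (⋃ i, ⋃ (_ : 1 ≤ i), A i) := by rw [hunion]; trivial
    simpa using hx
  have hP : ∃ i, 1 ≤ i ∧ p ∈ interior (A i ×ˢ A i) := by
    obtain ⟨a, ha, hpa⟩ := hex p.1
    obtain ⟨b, hb, hpb⟩ := hex p.2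
    have hm : 1 ≤ max a b := ha.trans (le_max_left a b)
    refine ⟨max a b + 1, by omega, ?_⟩
    rw [interior_prod_eq]
    exact ⟨hYA _ hm (subset_closure (hAY _ hm (mono _ _ ha (le_max_left a b) hpa))),
      hYA _ hm (subset_closure (hAY _ hm (mono _ _ hb (le_max_right a b) hpb)))⟩
  obtain ⟨h1, hp⟩ := Nat.find_spec hP
  have hmin : ∀ j, j < Nat.find hP → ¬ (1 ≤ j ∧ p ∈ interior (A j ×ˢ A j)) :=
    fun j hj => Nat.find_min hP hj
  generalize Nat.find hP = n at h1 hp hmin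
  refine ⟨n, h1, ?_⟩
  by_cases hn : 2 < n
  · rw [hLi n hn]
    refine ⟨hp, fun hc => hmin (n - 1) (by omega) ⟨by omega, ?_⟩⟩
    rw [closure_prod_eq] at hc
    have h := hYA (n - 2) (by omega)
    rw [show n - 2 + 1 = n - 1 by omega] at h
    rw [interior_prod_eq]
    exact ⟨h hc.1, h hc.2⟩
  · obtain rfl | rfl : n = 1 ∨ n = 2 := by omega
    · rwa [hL1]
    · rwa [hL2]
end

section
/- Let X and Y be topological spaces and let f : X → Y be a homotopy equivalence. Let n be a positive integer and suppose Y × Y can be covered by n open sets, each vertically compressible to the diagonal Δ(Y). Then X × X can be covered by n open sets, each vertically compressible to the diagonal Δ(X). -/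
open unitInterval

/-- Vertical compressibility says that the two projections restricted to `U` are homotopic. -/
theorem verticallyCompressible_iff {X : Type*} [TopologicalSpace X] (U : Set (X × X)) :
    VerticallyCompressible U ↔
      ContinuousMap.Homotopic (⟨fun p : U => (p : X × X).2, by fun_prop⟩ : C(U, X))
        ⟨fun p : U => (p : X × X).1, by fun_prop⟩ := by
  constructor
  · rintro ⟨h, hc, h0, h1⟩
    exact ⟨{ toFun := fun q => h (q.2, q.1)
             continuous_toFun := by fun_prop
             map_zero_left := h0
             map_one_left := h1 }⟩
  · rintro ⟨F⟩
    exact ⟨fun q => F (q.2, q.1), F.continuous.comp (by fun_prop),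
      fun p => F.apply_zero p, fun p => F.apply_one p⟩

/-- Homotopy invariance of topological complexity in the Iwase–Sakai open-cover formulation:
if `f : X → Y` is a homotopy equivalence and `Y × Y` admits an open cover by `n` sets
vertically compressible to the diagonal `Δ(Y)`, then `X × X` admits an open cover by `n` sets
vertically compressible to the diagonal `Δ(X)`. -/
theorem tc_homotopy_invariant {X Y : Type*} [TopologicalSpace X] [TopologicalSpace Y]
    (f : ContinuousMap.HomotopyEquiv X Y) (n : ℕ) (hn : 0 < n)
    (hY : ∃ U : Fin n → Set (Y × Y),
      (∀ j, IsOpen (U j)) ∧ ((⋃ j, U j) = Set.univ) ∧ ∀ j, VerticallyCompressible (U j)) :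
    ∃ U : Fin n → Set (X × X),
      (∀ j, IsOpen (U j)) ∧ ((⋃ j, U j) = Set.univ) ∧ ∀ j, VerticallyCompressible (U j) := by
  obtain ⟨U, ho, hc, hv⟩ := hY
  have hfc : Continuous (fun p : X × X => (f p.1, f p.2)) :=
    (f.continuous.comp continuous_fst).prodMk (f.continuous.comp continuous_snd)
  refine ⟨fun j => (fun p : X × X => (f p.1, f p.2)) ⁻¹' U j,
    fun j => (ho j).preimage hfc, ?_, fun j => ?_⟩
  · rw [← Set.preimage_iUnion, hc, Set.preimage_univ]
  · rw [verticallyCompressible_iff]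
    have h := (verticallyCompressible_iff _).1 (hv j)
    let V : Set (X × X) := (fun p : X × X => (f p.1, f p.2)) ⁻¹' U j
    let φ : C(V, U j) := ⟨fun p => ⟨(f p.1.1, f p.1.2), p.2⟩,
      (hfc.comp continuous_subtype_val).subtype_mk _⟩
    let a : C(V, X) := ⟨fun p => p.1.2, by fun_prop⟩
    let b : C(V, X) := ⟨fun p => p.1.1, by fun_prop⟩
    have ha := f.left_inv.comp (ContinuousMap.Homotopic.refl a)
    have hb := f.left_inv.comp (ContinuousMap.Homotopic.refl b)
    have hm := (ContinuousMap.Homotopic.refl f.invFun).comp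
      (h.comp (ContinuousMap.Homotopic.refl φ))
    exact (ha.symm.trans hm).trans hb
end
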